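/- There exists a basis of ℂ^{B_q(n)} consisting of eigenvectors of M_q(n) which is orthogonal with respect to the inner product ⟨u,v⟩_π := ∑_{X ∈ B_q(n)} conj(u(X)) v(X) π(X), and in which exactly [n choose k]_q basis vectors have eigenvalue (n−k)_q − (k)_q, for each k = 0, 1, …, n. -/

import Mathlib

noncomputable instance (F : Type) [Field F] [Fintype F] (m : ℕ) :
    Fintype (Submodule F (Fin m → F)) := Fintype.ofFinite _

/-- The q-integer `(m)_q = 1 + q + ⋯ + q^(m-1)`, with `(0)_q = 0`. -/
def qInt (q m : ℕ) : ℕ := ∑ i ∈ Finset.range m, q ^ i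

/-- The Gaussian binomial coefficient `[n choose k]_q`: the number of
`k`-dimensional subspaces of `F^n`. -/
noncomputable def gaussBinom (F : Type) [Field F] [Fintype F] (n k : ℕ) : ℕ :=
  Nat.card {X : Submodule F (Fin n → F) // Module.finrank F X = k}

/-- The q-analog of the adjacency matrix of the n-cube. -/
noncomputable def Mq (F : Type) [Field F] [Fintype F] (n : ℕ) :
    Matrix (Submodule F (Fin n → F)) (Submodule F (Fin n → F)) ℂ :=
  open Classical in
  fun X Y =>
    if Y ≤ X ∧ Module.finrank F Y + 1 = Module.finrank F X then 1
    else if X ≤ Y ∧ Module.finrank F Y = Module.finrank F X + 1 then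
      (Fintype.card F : ℂ) ^ (Module.finrank F X)
    else 0

/-- The stationary distribution `π(X) = q^(binom (dim X) 2) / P_q(n)`, where
`P_q(n) = ∏_{k=0}^{n-1} (1 + q^k)`. -/
noncomputable def piDist (F : Type) [Field F] [Fintype F] (n : ℕ)
    (X : Submodule F (Fin n → F)) : ℂ :=
  (Fintype.card F : ℂ) ^ (Nat.choose (Module.finrank F X) 2) /
    ∏ k ∈ Finset.range n, (1 + (Fintype.card F : ℂ) ^ k)

/-- The inner product `⟨u, v⟩_π = ∑_X conj(u X) (v X) π(X)` on `ℂ^(B_q(n))`. -/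
noncomputable def innerPi (F : Type) [Field F] [Fintype F] (n : ℕ)
    (u v : Submodule F (Fin n → F) → ℂ) : ℂ :=
  ∑ X : Submodule F (Fin n → F), (starRingEnd ℂ) (u X) * v X * piDist F n X

/-! Write `q` for the number of elements of `F` and `b Y` for the indicator function of the set of
subspaces of `Y`. Then
`Mq *ᵥ b Y = ((dim Y)_q - (n - dim Y)_q) • b Y + ∑ b W`, the sum being over the `W` covering `Y`.
Evaluated at `X ≤ Y` this is the identity `(a)_q + q ^ a * (b)_q = (a + b)_q`; at `X` not below `Y`
it says that there are as many `Z ⋖ X` below `Y` as there are `W ⋗ Y` above `X`, which is the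
modular law: the only candidates are `X ⊓ Y` and `X ⊔ Y`.

So `Mq` is triangular in the basis `b`, ordered by decreasing dimension. It is also self-adjoint for
`⟨·,·⟩_π`, by the detailed balance `π X * Mq X Z = π Z * Mq Z X`. A self-adjoint operator that is
triangular in a basis is diagonal in its Gram–Schmidt orthogonalisation, with the same diagonal. -/

section TriangularSelfAdjoint

open InnerProductSpace Matrix Submodule
open scoped ComplexOrder

variable {𝕜 κ : Type*} [RCLike 𝕜]

/- `T` preserves the span `U` of the vectors before `b i`, hence also `Uᗮ`, which contains the
`i`-th Gram–Schmidt vector `g`. So `T g - c i • g` lies in both `U` and `Uᗮ`. -/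
theorem apply_gramSchmidt_eq_smul_of_triangular {E : Type*} [NormedAddCommGroup E]
    [InnerProductSpace 𝕜 E] [LinearOrder κ] [LocallyFiniteOrderBot κ] [WellFoundedLT κ]
    {T : E →ₗ[𝕜] E} (hT : T.IsSymmetric) {b : κ → E} {c : κ → 𝕜}
    (hb : ∀ i, T (b i) - c i • b i ∈ span 𝕜 (b '' Set.Iio i)) (i : κ) :
    T (gramSchmidt 𝕜 b i) = c i • gramSchmidt 𝕜 b i := by
  set U := span 𝕜 (b '' Set.Iio i) with hU
  set g := gramSchmidt 𝕜 b i with hg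
  have map_le : U ≤ U.comap T := by
    refine span_le.2 ?_
    rintro _ ⟨j, hj, rfl⟩
    have hlt : T (b j) - c j • b j ∈ U :=
      span_mono (Set.image_mono (Set.Iio_subset_Iio (le_of_lt hj))) (hb j)
    have hbj : b j ∈ U := subset_span ⟨j, hj, rfl⟩
    change T (b j) ∈ U
    simpa only [sub_add_cancel] using U.add_mem hlt (U.smul_mem (c j) hbj)
  have b_sub_mem : b i - g ∈ U := by
    rw [hg, gramSchmidt_def, sub_sub_cancel, hU, ← span_gramSchmidt_Iio 𝕜 b i]
    refine sum_mem fun j hj ↦ span_mono ?_ (starProjection_apply_mem _ _)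
    exact Set.singleton_subset_iff.2 ⟨j, Finset.mem_Iio.1 hj, rfl⟩
  have g_mem_orthogonal : g ∈ Uᗮ := by
    suffices U ≤ (𝕜 ∙ g)ᗮ from fun u hu ↦ mem_orthogonal_singleton_iff_inner_left.1 (this hu)
    refine span_le.2 ?_
    rintro _ ⟨j, hj, rfl⟩
    exact mem_orthogonal_singleton_iff_inner_right.2 (gramSchmidt_inv_triangular 𝕜 b hj)
  have mem : T g - c i • g ∈ U := by
    have := U.sub_mem (hb i) (U.sub_mem (map_le b_sub_mem) (U.smul_mem (c i) b_sub_mem))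
    convert this using 1
    rw [map_sub]
    module
  have mem_orthogonal : T g - c i • g ∈ Uᗮ := by
    refine Uᗮ.sub_mem (fun u hu ↦ ?_) (Uᗮ.smul_mem (c i) g_mem_orthogonal)
    rw [← hT]
    exact g_mem_orthogonal _ (map_le hu)
  exact sub_eq_zero.1 (disjoint_def.1 U.orthogonal_disjoint _ mem mem_orthogonal)

theorem exists_orthogonal_eigenvectors_of_triangular {E : Type*} [NormedAddCommGroup E]
    [InnerProductSpace 𝕜 E] {δ : Type*} [LinearOrder δ] [Finite κ]
    {T : E →ₗ[𝕜] E} (hT : T.IsSymmetric) {b : κ → E} (hli : LinearIndependent 𝕜 b)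
    {d : κ → δ} {c : κ → 𝕜} (hb : ∀ i, T (b i) - c i • b i ∈ span 𝕜 (b '' {j | d j < d i})) :
    ∃ v : κ → E, LinearIndependent 𝕜 v ∧
      (Pairwise fun i j ↦ inner 𝕜 (v i) (v j) = 0) ∧ ∀ i, T (v i) = c i • v i := by
  classical
  have := Fintype.ofFinite κ
  let e : κ → δ ×ₗ Fin (Nat.card κ) := fun i ↦ toLex (d i, Finite.equivFin κ i)
  have e_injective : e.Injective := fun i j hij ↦
    (Finite.equivFin κ).injective (Prod.ext_iff.1 (toLex_inj.1 hij)).2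
  let : LinearOrder κ := LinearOrder.lift' e e_injective
  let : LocallyFiniteOrderBot κ := .ofIic κ (fun i ↦ {j | j ≤ i}) (by simp)
  have lt_of_d_lt : ∀ {i j}, d j < d i → j < i := fun h ↦ Prod.Lex.toLex_lt_toLex.2 (.inl h)
  refine ⟨gramSchmidt 𝕜 b, gramSchmidt_linearIndependent hli,
    gramSchmidt_pairwise_orthogonal 𝕜 b, apply_gramSchmidt_eq_smul_of_triangular hT fun i ↦ ?_⟩
  exact span_mono (Set.image_mono fun _ ↦ lt_of_d_lt) (hb i)

theorem exists_orthogonal_eigenvectors_of_triangular_matrix {ι δ : Type*} [Fintype ι]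
    [LinearOrder δ] [Finite κ] {G A : Matrix ι ι 𝕜} (hG : G.PosDef) (hA : (G * A).IsHermitian)
    {b : κ → ι → 𝕜} (hli : LinearIndependent 𝕜 b) {d : κ → δ} {c : κ → 𝕜}
    (hb : ∀ i, A *ᵥ b i - c i • b i ∈ span 𝕜 (b '' {j | d j < d i})) :
    ∃ v : κ → ι → 𝕜, LinearIndependent 𝕜 v ∧
      (Pairwise fun i j ↦ star (v i) ⬝ᵥ G *ᵥ v j = 0) ∧ ∀ i, A *ᵥ v i = c i • v i := by
  let instNormed := G.toNormedAddCommGroup hG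
  let instInner := G.toInnerProductSpace hG.posSemidef
  have inner_eq (x y : ι → 𝕜) : instInner.inner x y = star x ⬝ᵥ G *ᵥ y := dotProduct_comm _ _
  have mulVec_symm (x y : ι → 𝕜) : instInner.inner (A *ᵥ x) y = instInner.inner x (A *ᵥ y) := by
    rw [inner_eq, inner_eq, star_mulVec, ← dotProduct_mulVec, mulVec_mulVec, mulVec_mulVec,
      ← hA.eq, conjTranspose_mul, hG.isHermitian.eq]
  obtain ⟨v, hli_v, horth, heig⟩ := @exists_orthogonal_eigenvectors_of_triangular
    𝕜 κ _ (ι → 𝕜) instNormed instInner δ _ _ A.mulVecLin mulVec_symm b hli d c hb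
  exact ⟨v, hli_v, fun i j hij ↦ (inner_eq _ _).symm.trans (horth hij), heig⟩

end TriangularSelfAdjoint

section Lattice

theorem ncard_covBy_and_le_eq_of_not_le {α : Type*} [Lattice α] [IsModularLattice α] {a b : α}
    (h : ¬ a ≤ b) : {c | c ⋖ a ∧ c ≤ b}.ncard = {c | b ⋖ c ∧ a ≤ c}.ncard := by
  have hinf : {c | c ⋖ a ∧ c ≤ b} = {c | c = a ⊓ b ∧ a ⊓ b ⋖ a} := by
    ext c
    refine ⟨fun ⟨hca, hcb⟩ ↦ ?_, ?_⟩
    · have : a ⊓ b = c := (hca.eq_or_eq (le_inf hca.le hcb) inf_le_left).resolve_right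
        (inf_lt_left.2 h).ne
      exact ⟨this.symm, this ▸ hca⟩
    · rintro ⟨rfl, hcov⟩
      exact ⟨hcov, inf_le_right⟩
  have hsup : {c | b ⋖ c ∧ a ≤ c} = {c | c = a ⊔ b ∧ b ⋖ a ⊔ b} := by
    ext c
    refine ⟨fun ⟨hbc, hac⟩ ↦ ?_, ?_⟩
    · have : a ⊔ b = c := (hbc.eq_or_eq le_sup_right (sup_le hac hbc.le)).resolve_left
        (right_lt_sup.2 h).ne'
      exact ⟨this.symm, this ▸ hbc⟩
    · rintro ⟨rfl, hcov⟩
      exact ⟨hcov, le_sup_left⟩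
  have hmod : a ⊓ b ⋖ a ↔ b ⋖ a ⊔ b :=
    ⟨covBy_sup_of_inf_covBy_left, inf_covBy_of_covBy_sup_right⟩
  rw [hinf, hsup, hmod]
  by_cases hcov : b ⋖ a ⊔ b <;> simp [hcov]

theorem linearIndependent_indicator_Iic {α R : Type*} [PartialOrder α] [Ring R] :
    LinearIndependent R fun a : α ↦ (Set.Iic a).indicator (1 : α → R) := by
  classical
  rw [linearIndependent_iff']
  intro s g hg
  by_contra! hne
  obtain ⟨i, hi⟩ := (s.filter (g · ≠ 0)).exists_maximal <| by
    simpa [Finset.filter_nonempty_iff] using hne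
  obtain ⟨his, hgi⟩ := Finset.mem_filter.1 hi.prop
  refine hgi ?_
  have hsum := congrFun hg i
  rw [Finset.sum_apply, Finset.sum_eq_single_of_mem i his] at hsum
  · simpa using hsum
  · intro j hj hji
    by_cases hij : i ≤ j
    · have : g j = 0 := by
        by_contra hgj
        exact hji (hi.eq_of_le (Finset.mem_filter.2 ⟨hj, hgj⟩) hij).symm
      simp [this]
    · simp [hij]

end Lattice

section Subspaces

open Module Submodule

section DivisionRing

variable {K V : Type*} [DivisionRing K] [AddCommGroup V] [Module K V]

theorem finrank_quotient_submoduleOf [FiniteDimensional K V] {X Y : Submodule K V} (h : X ≤ Y) :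
    finrank K (Y ⧸ X.submoduleOf Y) = finrank K Y - finrank K X := by
  rw [finrank_quotient, (submoduleOfEquivOfLe h).finrank_eq]

theorem covBy_iff_le_and_finrank [FiniteDimensional K V] {X Y : Submodule K V} :
    X ⋖ Y ↔ X ≤ Y ∧ finrank K X + 1 = finrank K Y := by
  refine (and_iff_right_of_imp CovBy.le).symm.trans (and_congr_right fun hle ↦ ?_)
  rw [covBy_iff_quot_is_simple hle, isSimpleModule_iff_finrank_eq_one]
  change finrank K (Y ⧸ X.submoduleOf Y) = 1 ↔ _
  have := finrank_mono hle
  rw [finrank_quotient_submoduleOf hle]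
  omega

theorem ncard_isAtom [Finite K] :
    {L : Submodule K V | IsAtom L}.ncard = qInt (Nat.card K) (finrank K V) := by
  simp only [isAtom_iff_finrank_eq_one]
  rw [← Nat.card_coe_set_eq]
  exact (Nat.card_congr (Projectivization.equivSubmodule K V).symm).trans
    (Projectivization.card_of_finrank K V rfl)

end DivisionRing

variable {K V : Type*} [Field K] [AddCommGroup V] [Module K V]

theorem ncard_isCoatom [Finite K] [FiniteDimensional K V] :
    {H : Submodule K V | IsCoatom H}.ncard = qInt (Nat.card K) (finrank K V) := by
  rw [← Subspace.dual_finrank_eq, ← ncard_isAtom]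
  let e : Submodule K V ≃o (Submodule K (Dual K V))ᵒᵈ := Subspace.orderIsoFiniteDimensional
  exact Set.ncard_congr' <|
    (e.toEquiv.trans OrderDual.ofDual).subtypeEquiv fun H ↦ (e.isCoatom_iff H).symm

theorem ncard_lowerCovers [Finite K] [FiniteDimensional K V] (X : Submodule K V) :
    {Z | Z ⋖ X}.ncard = qInt (Nat.card K) (finrank K X) := by
  have isCoatom_iff (H : Submodule K X) : IsCoatom H ↔ (X.mapIic H : Submodule K V) ⋖ X := by
    rw [← Set.Iic.isCoatom_iff, OrderIso.isCoatom_iff]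
  rw [← ncard_isCoatom]
  exact Set.ncard_congr' ((X.mapIic.toEquiv.subtypeEquiv isCoatom_iff).trans
    (Equiv.subtypeSubtypeEquivSubtype CovBy.le)).symm

theorem ncard_upperCovers [Finite K] (X : Submodule K V) :
    {Z | X ⋖ Z}.ncard = qInt (Nat.card K) (finrank K (V ⧸ X)) := by
  have isAtom_iff (L : Submodule K (V ⧸ X)) :
      IsAtom L ↔ X ⋖ (comapMkQRelIso X L : Submodule K V) := by
    rw [← Set.Ici.isAtom_iff, OrderIso.isAtom_iff]
  rw [← ncard_isAtom]
  exact Set.ncard_congr' (((comapMkQRelIso X).toEquiv.subtypeEquiv isAtom_iff).trans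
    (Equiv.subtypeSubtypeEquivSubtype CovBy.le)).symm

theorem ncard_upperCovers_le [Finite K] [FiniteDimensional K V] {X Y : Submodule K V}
    (h : X ≤ Y) :
    {Z | X ⋖ Z ∧ Z ≤ Y}.ncard = qInt (Nat.card K) (finrank K Y - finrank K X) := by
  have covBy_iff (Z : Submodule K Y) :
      X.submoduleOf Y ⋖ Z ↔ X ⋖ (Y.mapIic Z : Submodule K V) := by
    have hX : X = Y.mapIic (X.submoduleOf Y) := by simp [submoduleOf, h]
    nth_rw 2 [hX]
    rw [← apply_covBy_apply_iff Y.mapIic]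
    exact (Set.OrdConnected.apply_covBy_apply_iff (OrderEmbedding.subtype (· ∈ Set.Iic Y))
      (Subtype.range_coe ▸ Set.ordConnected_Iic)).symm
  simp_rw [and_comm (b := _ ≤ Y)]
  rw [← finrank_quotient_submoduleOf h, ← ncard_upperCovers]
  exact Set.ncard_congr' ((Y.mapIic.toEquiv.subtypeEquiv covBy_iff).trans
    (Equiv.subtypeSubtypeEquivSubtypeInter (· ≤ Y) (X ⋖ ·))).symm

theorem natCard_finrank_add_eq [FiniteDimensional K V] (k : ℕ) :
    Nat.card {X : Submodule K V // finrank K X + k = finrank K V} =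
      Nat.card {X : Submodule K V // finrank K X = k} := by
  let toDual : Submodule K V ≃ Submodule K (Dual K V) :=
    Subspace.orderIsoFiniteDimensional.toEquiv.trans OrderDual.ofDual
  let ofDual : Submodule K (Dual K V) ≃o Submodule K V :=
    orderIsoMapComap (finBasis K V).toDualEquiv.symm
  refine Nat.card_congr ((toDual.trans ofDual.toEquiv).subtypeEquiv fun X ↦ ?_)
  have hann : finrank K X + finrank K (toDual X) = finrank K V :=
    Subspace.finrank_add_finrank_dualAnnihilator_eq X
  have hmap : finrank K (ofDual (toDual X)) = finrank K (toDual X) :=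
    LinearEquiv.finrank_map_eq _ _
  change _ ↔ finrank K (ofDual (toDual X)) = k
  rw [hmap]
  omega

end Subspaces

section SubspaceLattice

open Matrix Module
open scoped ComplexOrder

theorem qInt_add (q a b : ℕ) : qInt q (a + b) = qInt q a + q ^ a * qInt q b := by
  simp only [qInt, Finset.sum_range_add, Finset.mul_sum, pow_add]

variable {F : Type} [Field F] [Fintype F] {n : ℕ}

open Classical in
theorem Mq_apply (X Z : Submodule F (Fin n → F)) :
    Mq F n X Z = (if Z ⋖ X then 1 else 0) +
      (Fintype.card F : ℂ) ^ finrank F X * if X ⋖ Z then 1 else 0 := by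
  have not_both : Z ⋖ X → ¬ X ⋖ Z := fun h h' ↦ h.lt.asymm h'.lt
  simp only [Mq, eq_comm (b := finrank F X + 1), ← covBy_iff_le_and_finrank]
  split_ifs <;> simp_all

theorem Mq_mulVec_indicator_apply (S : Set (Submodule F (Fin n → F)))
    (X : Submodule F (Fin n → F)) :
    (Mq F n *ᵥ S.indicator 1) X = {Z | Z ⋖ X ∧ Z ∈ S}.ncard +
      (Fintype.card F : ℂ) ^ finrank F X * {Z | X ⋖ Z ∧ Z ∈ S}.ncard := by
  classical
  simp only [mulVec, dotProduct, Mq_apply, add_mul, Finset.sum_add_distrib, mul_assoc,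
    ← Finset.mul_sum, Set.indicator_apply, Pi.one_apply, ite_mul, one_mul, zero_mul, ← ite_and,
    Finset.sum_boole, Set.ncard_eq_toFinset_card', Set.toFinset_ofPred]

open Classical in
theorem Mq_mulVec_indicator_Iic (Y : Submodule F (Fin n → F)) :
    Mq F n *ᵥ (Set.Iic Y).indicator 1 =
      ((qInt (Fintype.card F) (finrank F Y) : ℂ) - qInt (Fintype.card F) (n - finrank F Y)) •
          (Set.Iic Y).indicator 1 + ∑ W with Y ⋖ W, (Set.Iic W).indicator 1 := by
  ext X
  have hsum : (∑ W with Y ⋖ W, (Set.Iic W).indicator (1 : Submodule F (Fin n → F) → ℂ)) X =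
      {W | Y ⋖ W ∧ X ≤ W}.ncard := by
    simp [Set.indicator_apply, Set.ncard_eq_toFinset_card', Finset.filter_filter]
  rw [Mq_mulVec_indicator_apply, Pi.add_apply, hsum, Pi.smul_apply]
  simp only [Set.mem_Iic]
  by_cases hXY : X ≤ Y
  · have hlower : {Z | Z ⋖ X ∧ Z ≤ Y} = {Z | Z ⋖ X} :=
      Set.ext fun Z ↦ and_iff_left_of_imp fun hZ ↦ hZ.le.trans hXY
    have hupper : {W | Y ⋖ W ∧ X ≤ W} = {W | Y ⋖ W ∧ W ≤ ⊤} :=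
      Set.ext fun W ↦ and_congr_right fun hW ↦ iff_of_true (hXY.trans hW.le) le_top
    have hadd := qInt_add (Nat.card F) (finrank F X) (finrank F Y - finrank F X)
    rw [Nat.add_sub_cancel' (Submodule.finrank_mono hXY)] at hadd
    rw [hlower, hupper, ncard_lowerCovers, ncard_upperCovers_le hXY, ncard_upperCovers_le le_top,
      finrank_top, finrank_fin_fun, Set.indicator_of_mem hXY, ← Nat.card_eq_fintype_card, hadd]
    push_cast
    simp
  · have hempty : {Z | X ⋖ Z ∧ Z ≤ Y} = ∅ :=
      Set.eq_empty_of_forall_notMem fun Z hZ ↦ hXY (hZ.1.le.trans hZ.2)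
    rw [ncard_covBy_and_le_eq_of_not_le hXY, hempty, Set.indicator_of_notMem hXY]
    simp

theorem piDist_pos (X : Submodule F (Fin n → F)) : 0 < piDist F n X := by
  have hq : (0 : ℂ) < Fintype.card F := Nat.cast_pos.2 Fintype.card_pos
  exact div_pos (pow_pos hq _) (Finset.prod_pos fun k _ ↦ by positivity)

theorem piDist_of_covBy {Z X : Submodule F (Fin n → F)} (h : Z ⋖ X) :
    piDist F n X = piDist F n Z * (Fintype.card F : ℂ) ^ finrank F Z := by
  rw [piDist, piDist, ← (covBy_iff_le_and_finrank.1 h).2, Nat.choose_succ_succ',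
    Nat.choose_one_right, pow_add]
  ring

theorem isHermitian_diagonal_piDist_mul_Mq : (diagonal (piDist F n) * Mq F n).IsHermitian := by
  classical
  have detailed_balance (X Z : Submodule F (Fin n → F)) :
      piDist F n X * Mq F n X Z = piDist F n Z * Mq F n Z X := by
    rw [Mq_apply, Mq_apply]
    by_cases hZX : Z ⋖ X
    · simp [hZX, piDist_of_covBy hZX, mt CovBy.lt hZX.lt.asymm]
    · by_cases hXZ : X ⋖ Z
      · simp [hZX, hXZ, piDist_of_covBy hXZ]
      · simp [hZX, hXZ]
  have star_piDist (X : Submodule F (Fin n → F)) : star (piDist F n X) = piDist F n X := by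
    simp [piDist]
  have star_Mq (X Z : Submodule F (Fin n → F)) : star (Mq F n X Z) = Mq F n X Z := by
    rw [Mq_apply]
    split_ifs <;> simp
  ext X Z
  rw [conjTranspose_apply, diagonal_mul, diagonal_mul, star_mul', star_piDist, star_Mq,
    detailed_balance]

theorem innerPi_eq_dotProduct (u v : Submodule F (Fin n → F) → ℂ) :
    innerPi F n u v = star u ⬝ᵥ diagonal (piDist F n) *ᵥ v := by
  rw [innerPi, dotProduct]
  refine Finset.sum_congr rfl fun X _ ↦ ?_
  rw [mulVec_diagonal, mul_assoc, mul_comm (v X)]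
  rfl

variable (F n) in
theorem exists_orthogonal_eigenvectors_Mq :
    ∃ v : Submodule F (Fin n → F) → Submodule F (Fin n → F) → ℂ,
      LinearIndependent ℂ v ∧ (Pairwise fun Y Z ↦ innerPi F n (v Y) (v Z) = 0) ∧
      ∀ Y, Mq F n *ᵥ v Y = ((qInt (Fintype.card F) (finrank F Y) : ℂ) -
        qInt (Fintype.card F) (n - finrank F Y)) • v Y := by
  classical
  have posDef : (diagonal (piDist F n)).PosDef := posDef_diagonal_iff.2 piDist_pos
  simp only [innerPi_eq_dotProduct]
  refine exists_orthogonal_eigenvectors_of_triangular_matrix posDef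
    isHermitian_diagonal_piDist_mul_Mq (d := fun Y ↦ OrderDual.toDual (finrank F Y))
    linearIndependent_indicator_Iic fun Y ↦ ?_
  rw [Mq_mulVec_indicator_Iic, add_sub_cancel_left]
  refine Submodule.sum_mem _ fun W hW ↦ Submodule.subset_span ⟨W, ?_, rfl⟩
  exact Submodule.finrank_lt_finrank_of_lt (Finset.mem_filter.1 hW).2.lt

variable (F n) in
theorem exists_equiv_submodule_finrank_add_eq :
    ∃ e : (Σ k : Fin (n + 1), Fin (gaussBinom F n k)) ≃ Submodule F (Fin n → F),
      ∀ p, finrank F (e p) + p.1 = n := by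
  have finrank_le (X : Submodule F (Fin n → F)) : finrank F X ≤ n :=
    X.finrank_le.trans_eq (finrank_fin_fun F)
  let codim (X : Submodule F (Fin n → F)) : Fin (n + 1) := ⟨n - finrank F X, by omega⟩
  have codim_eq_iff (X : Submodule F (Fin n → F)) (k : Fin (n + 1)) :
      codim X = k ↔ finrank F X + k = n := by
    have := finrank_le X
    rw [Fin.ext_iff]
    change n - finrank F X = k ↔ _
    omega
  have card_fiber (k : Fin (n + 1)) : Nat.card {X // codim X = k} = gaussBinom F n k := by
    simpa only [codim_eq_iff, gaussBinom, finrank_fin_fun] using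
      natCard_finrank_add_eq (K := F) (V := Fin n → F) k
  let e := (Equiv.sigmaCongrRight fun k ↦ (Finite.equivFinOfCardEq (card_fiber k)).symm).trans
    (Equiv.sigmaFiberEquiv codim)
  exact ⟨e, fun p ↦ (codim_eq_iff _ _).1 (Subtype.prop (p := (codim · = p.1)) _)⟩

end SubspaceLattice

/-- There is a basis of `ℂ^(B_q(n))` of eigenvectors of `M_q(n)`, orthogonal for
`⟨·,·⟩_π`, containing exactly `[n choose k]_q` vectors of eigenvalue
`(n−k)_q − (k)_q` for each `k = 0, 1, …, n`. -/
theorem orthogonal_eigenbasis (F : Type) [Field F] [Fintype F] (n : ℕ) :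
    ∃ v : (Σ k : Fin (n + 1), Fin (gaussBinom F n (k : ℕ))) →
        (Submodule F (Fin n → F) → ℂ),
      LinearIndependent ℂ v ∧
      ⊤ ≤ Submodule.span ℂ (Set.range v) ∧
      (∀ p p', p ≠ p' → innerPi F n (v p) (v p') = 0) ∧
      (∀ p, (Mq F n).mulVec (v p) =
        ((qInt (Fintype.card F) (n - (p.1 : ℕ)) : ℂ) -
          (qInt (Fintype.card F) (p.1 : ℕ) : ℂ)) • v p) := by
  obtain ⟨v, hli, horth, heig⟩ := exists_orthogonal_eigenvectors_Mq F n
  obtain ⟨e, finrank_e⟩ := exists_equiv_submodule_finrank_add_eq F n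
  have hli_e : LinearIndependent ℂ (v ∘ e) := hli.comp e e.injective
  refine ⟨v ∘ e, hli_e, ?_, fun p p' hp ↦ horth (e.injective.ne hp), fun p ↦ ?_⟩
  · refine (hli_e.span_eq_top_of_card_eq_finrank' ?_).ge
    rw [Fintype.card_congr e, Module.finrank_fintype_fun_eq_card]
  · have codim_e := finrank_e p
    have dim_e : Module.finrank F (e p) = n - p.1 := by omega
    rw [Function.comp_apply, heig, dim_e, Nat.sub_sub_self (by omega)]
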